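/- Let n ≥ 3 and let M : Fin n → Fin n → Bool be an absorbing state of the binary trust gossip model. Then no agent can have both a mutual trust relation and an outgoing one-way trust relation: there do not exist agents i, j, k with i ≠ j, i ≠ k, j ≠ k such that i ∼ j and i ▷ k. -/

import Mathlib

/-- A state `M` is absorbing if for all pairwise distinct agents `a z y`,
if `z` trusts `a` then `z` already agrees with `a` about `y`. -/
def Absorbing {n : ℕ} (M : Fin n → Fin n → Bool) : Prop :=
  ∀ a z y : Fin n, a ≠ z → a ≠ y → z ≠ y → M z a = true → M z y = M a y

/-- In an absorbing state, no agent has both a mutual trust relation and an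
outgoing one-way trust relation. -/
theorem no_mutual_and_oneway {n : ℕ} (hn : 3 ≤ n) (M : Fin n → Fin n → Bool)
    (hdiag : ∀ i, M i i = false) (habs : Absorbing M) :
    ¬ ∃ i j k : Fin n, i ≠ j ∧ i ≠ k ∧ j ≠ k ∧
      (M i j = true ∧ M j i = true) ∧ (M i k = true ∧ M k i = false) := by
  rintro ⟨i, j, k, hij, hik, hjk, ⟨h1, h2⟩, h3, h4⟩
  have h5 : M j k = true := (habs j i k hij.symm hjk hik h1).symm.trans h3
  have h6 := habs k j i hjk.symm hik.symm hij.symm h5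
  rw [h2, h4] at h6
  exact Bool.noConfusion h6
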